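/- Fix real numbers x0 < x1 and y ∈ (x0, x1], and let α : ℝ → ℝ be Lebesgue integrable on (x0, x1). Then for every ω ∈ ℝ, Re( E_α^{(x0,y)}(ω) · conj( E_{−α}^{(x0,y)}(ω) ) ) = 1. -/

import Mathlib

open MeasureTheory

/-- The iterates `A_ω^j 𝟙` of the conjugate-linear Volterra operator
`A_ω f(t) = ∫_{x0}^t α(s) e^{2i(s−x0)ω} conj(f(s)) ds`. -/
noncomputable def Aiter (x0 : ℝ) (α : ℝ → ℝ) (ω : ℂ) : ℕ → ℝ → ℂ
  | 0 => fun _ => 1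
  | j + 1 => fun t =>
      ∫ s in x0..t,
        (α s : ℂ) * Complex.exp (2 * Complex.I * ((s : ℂ) - (x0 : ℂ)) * ω)
          * (starRingEnd ℂ) (Aiter x0 α ω j s)

/-- The harmonic exponential `E_α^{(x0,y)}(ω) = Σ_{j≥0} A_ω^j 𝟙(y)`. -/
noncomputable def harmE (x0 y : ℝ) (α : ℝ → ℝ) (ω : ℂ) : ℂ :=
  ∑' j : ℕ, Aiter x0 α ω j y

/-!
Both harmonic exponentials solve linear evolution equations in the real Hilbert space `ℂ`:
`E_α` solves `u' = L u` and `E_{-α}` solves `v' = -L v`, where `L(t) z = k(t) * conj z` with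
`k(t) = α(t) e^{2i(t - x0)ω}`. Although conjugate-linear, `L(t)` is symmetric for the real inner
product `⟪v, u⟫ = Re (u * conj v)`, so `⟪v, u⟫' = ⟪v, L u⟫ - ⟪L v, u⟫ = 0` almost everywhere.
The pairing is absolutely continuous, hence keeps its initial value `1`.
-/

section AbsolutelyContinuous

open Set Filter AbsolutelyContinuousOnInterval
open scoped Topology

variable {a b c : ℝ}

theorem absolutelyContinuousOnInterval_of_dist_le {X : Type*} [PseudoMetricSpace X] {f : ℝ → X}
    {δ : ℝ → ℝ → ℝ} (hf : ∀ s ∈ uIcc a b, ∀ t ∈ uIcc a b, dist (f s) (f t) ≤ δ s t)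
    (hδ : Tendsto (fun I : ℕ × (ℕ → ℝ × ℝ) => ∑ i ∈ Finset.range I.1, δ (I.2 i).1 (I.2 i).2)
      (totalLengthFilter ⊓ 𝓟 (disjWithin a b)) (𝓝 0)) :
    AbsolutelyContinuousOnInterval f a b := by
  refine squeeze_zero' (Eventually.of_forall fun I => Finset.sum_nonneg fun i _ => dist_nonneg) ?_
    hδ
  filter_upwards [mem_inf_of_right (mem_principal_self (disjWithin a b))] with I hI
  exact Finset.sum_le_sum fun i hi => hf _ (hI.1 i hi).1 _ (hI.1 i hi).2

theorem absolutelyContinuousOnInterval_const_add {E : Type*} [SeminormedAddCommGroup E]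
    {f : ℝ → E} (x : E) (hf : AbsolutelyContinuousOnInterval f a b) :
    AbsolutelyContinuousOnInterval (fun t => x + f t) a b :=
  absolutelyContinuousOnInterval_of_dist_le (fun _ _ _ _ => (dist_add_left _ _ _).le) hf

theorem absolutelyContinuousOnInterval_primitive {E : Type*} [NormedAddCommGroup E]
    [NormedSpace ℝ E] {f : ℝ → E} (hf : IntervalIntegrable f volume a b) (hc : c ∈ uIcc a b) :
    AbsolutelyContinuousOnInterval (fun t => ∫ s in c..t, f s) a b := by
  refine absolutelyContinuousOnInterval_of_dist_le
    (δ := fun s t => dist (∫ r in c..s, ‖f r‖) (∫ r in c..t, ‖f r‖)) (fun s hs t ht => ?_)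
    (hf.norm.absolutelyContinuousOnInterval_intervalIntegral hc)
  have hfs : IntervalIntegrable f volume c s := hf.mono_set (uIcc_subset_uIcc hc hs)
  have hft : IntervalIntegrable f volume c t := hf.mono_set (uIcc_subset_uIcc hc ht)
  rw [dist_eq_norm, Real.dist_eq, intervalIntegral.integral_interval_sub_left hfs hft,
    intervalIntegral.integral_interval_sub_left hfs.norm hft.norm]
  exact intervalIntegral.norm_integral_le_abs_integral_norm

theorem absolutelyContinuousOnInterval_bilin {E F G : Type*} [SeminormedAddCommGroup E]
    [NormedSpace ℝ E] [SeminormedAddCommGroup F] [NormedSpace ℝ F] [SeminormedAddCommGroup G]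
    [NormedSpace ℝ G] (B : E →L[ℝ] F →L[ℝ] G) {f : ℝ → E} {g : ℝ → F}
    (hf : AbsolutelyContinuousOnInterval f a b) (hg : AbsolutelyContinuousOnInterval g a b) :
    AbsolutelyContinuousOnInterval (fun t => B (f t) (g t)) a b := by
  obtain ⟨C, hC⟩ := hf.exists_bound
  obtain ⟨D, hD⟩ := hg.exists_bound
  refine absolutelyContinuousOnInterval_of_dist_le
    (δ := fun s t => ‖B‖ * C * dist (g s) (g t) + ‖B‖ * D * dist (f s) (f t))
    (fun s hs t ht => ?_) ?_
  · calc dist (B (f s) (g s)) (B (f t) (g t))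
        = ‖B (f s) (g s - g t) + B (f s - f t) (g t)‖ := by
          rw [dist_eq_norm, map_sub, map_sub, sub_apply, sub_add_sub_cancel]
      _ ≤ ‖B‖ * ‖f s‖ * ‖g s - g t‖ + ‖B‖ * ‖f s - f t‖ * ‖g t‖ :=
          (norm_add_le _ _).trans (add_le_add (B.le_opNorm₂ _ _) (B.le_opNorm₂ _ _))
      _ ≤ ‖B‖ * C * ‖g s - g t‖ + ‖B‖ * ‖f s - f t‖ * D := by
          gcongr
          exacts [hC s hs, hD t ht]
      _ = ‖B‖ * C * dist (g s) (g t) + ‖B‖ * D * dist (f s) (f t) := by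
          rw [dist_eq_norm, dist_eq_norm, mul_right_comm ‖B‖ _ D]
  · simpa only [Finset.sum_add_distrib, Finset.mul_sum, mul_zero, add_zero] using
      (Tendsto.const_mul (‖B‖ * C) hg).add (Tendsto.const_mul (‖B‖ * D) hf)

theorem absolutelyContinuousOnInterval_pow {f : ℝ → ℝ}
    (hf : AbsolutelyContinuousOnInterval f a b) (n : ℕ) :
    AbsolutelyContinuousOnInterval (fun t => f t ^ n) a b := by
  induction n with
  | zero =>
    simpa only [pow_zero] using
      (LipschitzWith.const (1 : ℝ)).lipschitzOnWith.absolutelyContinuousOnInterval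
  | succ n ih => simpa only [pow_succ] using ih.fun_mul hf

end AbsolutelyContinuous

section PrimitivePowers

open Set

variable {g : ℝ → ℝ} {a b : ℝ}

theorem integral_mul_primitive_pow (hg : IntervalIntegrable g volume a b) (n : ℕ) :
    ∫ s in a..b, g s * (∫ r in a..s, g r) ^ n = (∫ r in a..b, g r) ^ (n + 1) / (n + 1) := by
  have hderiv : ∫ s in a..b, deriv (fun t => (∫ r in a..t, g r) ^ (n + 1)) s
      = ∫ s in a..b, ((n : ℝ) + 1) * (g s * (∫ r in a..s, g r) ^ n) := by
    refine intervalIntegral.integral_congr_ae ?_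
    filter_upwards [hg.ae_hasDerivAt_integral] with s hs hsab
    rw [((hs (uIoc_subset_uIcc hsab) a left_mem_uIcc).fun_pow (n + 1)).deriv]
    push_cast
    ring
  have hac : AbsolutelyContinuousOnInterval (fun t => (∫ r in a..t, g r) ^ (n + 1)) a b :=
    absolutelyContinuousOnInterval_pow
      (hg.absolutelyContinuousOnInterval_intervalIntegral left_mem_uIcc) (n + 1)
  have hftc := hac.integral_deriv_eq_sub
  rw [hderiv, intervalIntegral.integral_const_mul, intervalIntegral.integral_same,
    zero_pow n.succ_ne_zero, sub_zero] at hftc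
  rw [eq_div_iff n.cast_add_one_ne_zero, mul_comm, hftc]

theorem abs_integral_mul_abs_primitive_pow (hg : IntervalIntegrable g volume a b)
    (hg₀ : ∀ s, 0 ≤ g s) (n : ℕ) :
    |∫ s in a..b, g s * |∫ r in a..s, g r| ^ n| = |∫ r in a..b, g r| ^ (n + 1) / (n + 1) := by
  obtain ⟨σ, hσ, hsign⟩ : ∃ σ : ℝ, |σ| = 1 ∧
      ∀ s ∈ uIcc a b, |∫ r in a..s, g r| = σ * ∫ r in a..s, g r := by
    rcases le_total a b with hab | hba
    · refine ⟨1, abs_one, fun s hs => ?_⟩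
      rw [uIcc_of_le hab] at hs
      rw [one_mul, abs_of_nonneg (intervalIntegral.integral_nonneg hs.1 fun r _ => hg₀ r)]
    · refine ⟨-1, by rw [abs_neg, abs_one], fun s hs => ?_⟩
      rw [uIcc_of_ge hba] at hs
      rw [neg_one_mul, abs_of_nonpos]
      rw [intervalIntegral.integral_symm, neg_nonpos]
      exact intervalIntegral.integral_nonneg hs.2 fun r _ => hg₀ r
  calc |∫ s in a..b, g s * |∫ r in a..s, g r| ^ n|
      = |σ ^ n * ∫ s in a..b, g s * (∫ r in a..s, g r) ^ n| := by
        rw [← intervalIntegral.integral_const_mul]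
        refine congrArg _ (intervalIntegral.integral_congr fun s hs => ?_)
        rw [hsign s hs, mul_pow, mul_left_comm]
    _ = |∫ r in a..b, g r| ^ (n + 1) / (n + 1) := by
        rw [integral_mul_primitive_pow hg, abs_mul, abs_pow, hσ, one_pow, one_mul, abs_div,
          abs_pow, abs_of_nonneg (n.cast_add_one_pos (α := ℝ)).le]

end PrimitivePowers

section PeanoBaker

open Set Filter
open scoped Interval

variable {E : Type*} [NormedAddCommGroup E] [NormedSpace ℝ E]

/-- The `j`-th term of the Peano–Baker series of the initial value problem `u' = L u`, `u a = x`: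
the `j`-th iterate of the Volterra operator `u ↦ ∫ s in a..t, L s (u s)` on the constant
function `x`. -/
noncomputable def peanoBakerTerm (L : ℝ → E →L[ℝ] E) (a : ℝ) (x : E) : ℕ → ℝ → E
  | 0 => fun _ => x
  | j + 1 => fun t => ∫ s in a..t, L s (peanoBakerTerm L a x j s)

/-- The Peano–Baker series, the solution at time `t` of the integrated initial value problem
`u t = x + ∫ s in a..t, L s (u s)`. -/
noncomputable def peanoBakerSeries (L : ℝ → E →L[ℝ] E) (a : ℝ) (x : E) (t : ℝ) : E :=
  ∑' j, peanoBakerTerm L a x j t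

variable {L : ℝ → E →L[ℝ] E} {a b : ℝ} {x : E}

theorem intervalIntegrable_clm_apply (hL : IntervalIntegrable L volume a b) {u : ℝ → E}
    (hu : ContinuousOn u (uIcc a b)) : IntervalIntegrable (fun s => L s (u s)) volume a b := by
  obtain ⟨C, hC⟩ := isCompact_uIcc.exists_bound_of_continuousOn hu
  have hmeas : AEStronglyMeasurable u (volume.restrict (Ι a b)) :=
    hu.aestronglyMeasurable_of_subset_isCompact isCompact_uIcc measurableSet_uIoc
      uIoc_subset_uIcc
  refine (hL.norm.mul_const C).mono_fun'
    ((ContinuousLinearMap.id ℝ (E →L[ℝ] E)).aestronglyMeasurable_comp₂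
      hL.aestronglyMeasurable_restrict_uIoc hmeas) ?_
  filter_upwards [ae_restrict_mem measurableSet_uIoc] with s hs
  exact (L s).le_opNorm_of_le (hC s (uIoc_subset_uIcc hs))

theorem continuousOn_peanoBakerTerm (hL : IntervalIntegrable L volume a b) (j : ℕ) :
    ContinuousOn (peanoBakerTerm L a x j) (uIcc a b) := by
  induction j with
  | zero => exact continuousOn_const
  | succ j ih =>
    exact intervalIntegral.continuousOn_primitive_interval'
      (intervalIntegrable_clm_apply hL ih) left_mem_uIcc

theorem norm_peanoBakerTerm_le_primitive (hL : IntervalIntegrable L volume a b) (j : ℕ) :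
    ∀ t ∈ uIcc a b,
      ‖peanoBakerTerm L a x j t‖ ≤ |∫ s in a..t, ‖L s‖| ^ j / (j.factorial : ℝ) * ‖x‖ := by
  induction j with
  | zero => simp [peanoBakerTerm]
  | succ j ih =>
    intro t ht
    have hLt : IntervalIntegrable (fun s => ‖L s‖) volume a t :=
      hL.norm.mono_set (uIcc_subset_uIcc_left ht)
    have hbound : IntervalIntegrable (fun s => ‖L s‖ * |∫ r in a..s, ‖L r‖| ^ j) volume a t :=
      hLt.mul_continuousOn
        ((intervalIntegral.continuousOn_primitive_interval' hLt left_mem_uIcc).abs.pow j)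
    calc ‖∫ s in a..t, L s (peanoBakerTerm L a x j s)‖
        ≤ |∫ s in a..t, ‖L s‖ * |∫ r in a..s, ‖L r‖| ^ j * (‖x‖ / j.factorial)| := by
          refine intervalIntegral.norm_integral_le_abs_of_norm_le ?_ (hbound.mul_const _)
          filter_upwards [ae_restrict_mem measurableSet_uIoc] with s hs
          refine ((L s).le_opNorm_of_le
            (ih s (uIcc_subset_uIcc_left ht (uIoc_subset_uIcc hs)))).trans_eq ?_
          ring
      _ = |∫ s in a..t, ‖L s‖| ^ (j + 1) / (j + 1) * (‖x‖ / j.factorial) := by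
          rw [intervalIntegral.integral_mul_const, abs_mul,
            abs_integral_mul_abs_primitive_pow hLt (fun s => norm_nonneg _),
            abs_of_nonneg (by positivity : 0 ≤ ‖x‖ / (j.factorial : ℝ))]
      _ = |∫ s in a..t, ‖L s‖| ^ (j + 1) / ((j + 1).factorial : ℝ) * ‖x‖ := by
          rw [Nat.factorial_succ]
          push_cast
          field_simp

theorem norm_peanoBakerTerm_le (hL : IntervalIntegrable L volume a b) (j : ℕ) {t : ℝ}
    (ht : t ∈ uIcc a b) :
    ‖peanoBakerTerm L a x j t‖ ≤ |∫ s in a..b, ‖L s‖| ^ j / (j.factorial : ℝ) * ‖x‖ := by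
  have hmono : |∫ s in a..t, ‖L s‖| ≤ |∫ s in a..b, ‖L s‖| :=
    intervalIntegral.abs_integral_mono_interval
      (uIoc_subset_uIoc_of_uIcc_subset_uIcc (uIcc_subset_uIcc_left ht))
      (Eventually.of_forall fun s => norm_nonneg _) hL.norm
  refine (norm_peanoBakerTerm_le_primitive hL j t ht).trans ?_
  gcongr

theorem summable_peanoBakerTerm_bound (L : ℝ → E →L[ℝ] E) (a b : ℝ) (x : E) :
    Summable fun j : ℕ => |∫ s in a..b, ‖L s‖| ^ j / (j.factorial : ℝ) * ‖x‖ :=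
  (Real.summable_pow_div_factorial _).mul_right _

variable [CompleteSpace E]

theorem continuousOn_peanoBakerSeries (hL : IntervalIntegrable L volume a b) :
    ContinuousOn (peanoBakerSeries L a x) (uIcc a b) :=
  continuousOn_tsum (continuousOn_peanoBakerTerm hL) (summable_peanoBakerTerm_bound L a b x)
    fun j _ ht => norm_peanoBakerTerm_le hL j ht

theorem summable_peanoBakerTerm (hL : IntervalIntegrable L volume a b) {t : ℝ}
    (ht : t ∈ uIcc a b) : Summable fun j => peanoBakerTerm L a x j t :=
  .of_norm_bounded (summable_peanoBakerTerm_bound L a b x)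
    fun j => norm_peanoBakerTerm_le hL j ht

theorem peanoBakerSeries_eq_add_integral (hL : IntervalIntegrable L volume a b) :
    peanoBakerSeries L a x b = x + ∫ s in a..b, L s (peanoBakerSeries L a x s) := by
  have hterm : HasSum (fun j => peanoBakerTerm L a x (j + 1) b)
      (∫ s in a..b, L s (peanoBakerSeries L a x s)) := by
    refine intervalIntegral.hasSum_integral_of_dominated_convergence
      (fun j s => ‖L s‖ * (|∫ r in a..b, ‖L r‖| ^ j / (j.factorial : ℝ) * ‖x‖))
      (fun j => (intervalIntegrable_clm_apply hL
        (continuousOn_peanoBakerTerm hL j)).aestronglyMeasurable_restrict_uIoc)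
      (fun j => Eventually.of_forall fun s hs =>
        (L s).le_opNorm_of_le (norm_peanoBakerTerm_le hL j (uIoc_subset_uIcc hs)))
      (Eventually.of_forall fun s _ => (summable_peanoBakerTerm_bound L a b x).mul_left _) ?_
      (Eventually.of_forall fun s hs =>
        (L s).hasSum (summable_peanoBakerTerm hL (uIoc_subset_uIcc hs)).hasSum)
    simp only [tsum_mul_left]
    exact hL.norm.mul_const _
  rw [peanoBakerSeries, (summable_peanoBakerTerm hL right_mem_uIcc).tsum_eq_zero_add,
    hterm.tsum_eq, peanoBakerTerm]

end PeanoBaker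

section Conservation

open Set
open scoped InnerProductSpace

variable {E : Type*} [NormedAddCommGroup E] [InnerProductSpace ℝ E] [CompleteSpace E]
  {L : ℝ → E →L[ℝ] E} {a b : ℝ}

theorem inner_eq_of_integral_equation_of_isSymmetric (hL : IntervalIntegrable L volume a b)
    (hsymm : ∀ s, (L s).IsSymmetric) {u v : ℝ → E} {x y : E}
    (hu : ContinuousOn u (uIcc a b)) (hv : ContinuousOn v (uIcc a b))
    (hu_eq : ∀ t ∈ uIcc a b, u t = x + ∫ s in a..t, L s (u s))
    (hv_eq : ∀ t ∈ uIcc a b, v t = y + ∫ s in a..t, (-L s) (v s)) :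
    ⟪u b, v b⟫_ℝ = ⟪x, y⟫_ℝ := by
  -- `u` and `v` are only controlled on `[a, b]`; differentiate these global extensions instead.
  set U : ℝ → E := fun t => x + ∫ s in a..t, L s (u s)
  set V : ℝ → E := fun t => y + ∫ s in a..t, (-L s) (v s)
  have hLu := intervalIntegrable_clm_apply hL hu
  have hLv := intervalIntegrable_clm_apply hL.neg hv
  have hac : AbsolutelyContinuousOnInterval (fun t => ⟪U t, V t⟫_ℝ) a b :=
    absolutelyContinuousOnInterval_bilin (innerSL ℝ)
      (absolutelyContinuousOnInterval_const_add x
        (absolutelyContinuousOnInterval_primitive hLu left_mem_uIcc))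
      (absolutelyContinuousOnInterval_const_add y
        (absolutelyContinuousOnInterval_primitive hLv left_mem_uIcc))
  have hderiv : ∀ᵐ t, t ∈ uIcc a b → HasDerivAt (fun t => ⟪U t, V t⟫_ℝ) 0 t := by
    filter_upwards [hLu.ae_hasDerivAt_integral, hLv.ae_hasDerivAt_integral] with t hUt hVt ht
    have hU : HasDerivAt U (L t (u t)) t := (hUt ht a left_mem_uIcc).const_add x
    have hV : HasDerivAt V ((-L t) (v t)) t := (hVt ht a left_mem_uIcc).const_add y
    refine (hU.inner ℝ hV).congr_deriv ?_
    have hcancel : ⟪L t (u t), v t⟫_ℝ = ⟪u t, L t (v t)⟫_ℝ := hsymm t (u t) (v t)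
    rw [show U t = u t from (hu_eq t ht).symm, show V t = v t from (hv_eq t ht).symm,
      neg_apply, inner_neg_right, hcancel, neg_add_cancel]
  obtain ⟨C, hC⟩ := hac.const_of_ae_hasDerivAt_zero hderiv
  calc ⟪u b, v b⟫_ℝ = ⟪U b, V b⟫_ℝ := by rw [hu_eq b right_mem_uIcc, hv_eq b right_mem_uIcc]
    _ = ⟪U a, V a⟫_ℝ := (hC b right_mem_uIcc).trans (hC a left_mem_uIcc).symm
    _ = ⟪x, y⟫_ℝ := by simp only [U, V, intervalIntegral.integral_same, add_zero]

theorem inner_peanoBakerSeries_neg (hL : IntervalIntegrable L volume a b)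
    (hsymm : ∀ s, (L s).IsSymmetric) (x y : E) :
    ⟪peanoBakerSeries L a x b, peanoBakerSeries (-L) a y b⟫_ℝ = ⟪x, y⟫_ℝ :=
  inner_eq_of_integral_equation_of_isSymmetric hL hsymm (continuousOn_peanoBakerSeries hL)
    (continuousOn_peanoBakerSeries hL.neg)
    (fun _ ht => peanoBakerSeries_eq_add_integral (hL.mono_set (uIcc_subset_uIcc_left ht)))
    (fun _ ht => peanoBakerSeries_eq_add_integral (hL.neg.mono_set (uIcc_subset_uIcc_left ht)))

end Conservation

section HarmonicExponential

open scoped ComplexConjugate InnerProductSpace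

theorem isSymmetric_smul_conjCLE (c : ℂ) :
    (c • (Complex.conjCLE : ℂ →L[ℝ] ℂ)).IsSymmetric := by
  intro z w
  change ⟪c * conj z, w⟫_ℝ = ⟪z, c * conj w⟫_ℝ
  simp only [Complex.inner, map_mul, Complex.conj_conj, Complex.mul_re, Complex.mul_im,
    Complex.conj_re, Complex.conj_im]
  ring

/-- The real-linear operator `z ↦ α(s) e^{2i(s - x0)ω} conj z` whose Volterra iterates define the
harmonic exponential. -/
noncomputable def harmonicGenerator (x0 : ℝ) (α : ℝ → ℝ) (ω : ℂ) (s : ℝ) : ℂ →L[ℝ] ℂ :=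
  ((α s : ℂ) * Complex.exp (2 * Complex.I * ((s : ℂ) - (x0 : ℂ)) * ω)) •
    (Complex.conjCLE : ℂ →L[ℝ] ℂ)

theorem harmonicGenerator_neg (x0 : ℝ) (α : ℝ → ℝ) (ω : ℂ) :
    harmonicGenerator x0 (fun s => -α s) ω = -harmonicGenerator x0 α ω := by
  funext s
  simp only [harmonicGenerator, Complex.ofReal_neg, neg_mul, Pi.neg_apply]
  exact neg_smul (R := ℂ) (M := ℂ →L[ℝ] ℂ) _ _

theorem intervalIntegrable_harmonicGenerator {x0 y : ℝ} {α : ℝ → ℝ}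
    (hα : IntervalIntegrable α volume x0 y) (ω : ℂ) :
    IntervalIntegrable (harmonicGenerator x0 α ω) volume x0 y := by
  have hk : IntervalIntegrable (fun s : ℝ => (α s : ℂ) *
      Complex.exp (2 * Complex.I * ((s : ℂ) - (x0 : ℂ)) * ω)) volume x0 y :=
    IntervalIntegrable.mul_continuousOn ⟨hα.1.ofReal, hα.2.ofReal⟩ (by fun_prop)
  exact ⟨hk.1.smul_const _, hk.2.smul_const _⟩

theorem aiter_eq_peanoBakerTerm (x0 : ℝ) (α : ℝ → ℝ) (ω : ℂ) (j : ℕ) :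
    Aiter x0 α ω j = peanoBakerTerm (harmonicGenerator x0 α ω) x0 1 j := by
  induction j with
  | zero => rfl
  | succ j ih => simp only [Aiter, peanoBakerTerm, ih]; rfl

theorem harmE_eq_peanoBakerSeries (x0 y : ℝ) (α : ℝ → ℝ) (ω : ℂ) :
    harmE x0 y α ω = peanoBakerSeries (harmonicGenerator x0 α ω) x0 1 y := by
  simp only [harmE, peanoBakerSeries, aiter_eq_peanoBakerTerm]

theorem harmonic_exponential_energy_identity_general (x0 y : ℝ) (α : ℝ → ℝ)
    (hα : IntervalIntegrable α volume x0 y) (ω : ℂ) :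
    (harmE x0 y α ω * (starRingEnd ℂ) (harmE x0 y (fun s => -α s) ω)).re = 1 := by
  have hconst := inner_peanoBakerSeries_neg (intervalIntegrable_harmonicGenerator hα ω)
    (fun s => isSymmetric_smul_conjCLE _) 1 1
  rw [← harmonicGenerator_neg, ← harmE_eq_peanoBakerSeries, ← harmE_eq_peanoBakerSeries,
    real_inner_comm, Complex.inner, Complex.inner] at hconst
  simpa [mul_comm] using hconst

end HarmonicExponential

/-- Proposition (prop-preliminary-approximation-application)(i):
`Re(E_α^{(x0,y)}(ω) · conj(E_{−α}^{(x0,y)}(ω))) = 1` for every real `ω`. -/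
theorem harmonic_exponential_energy_identity
    (x0 x1 y : ℝ) (hx : x0 < x1) (hy : y ∈ Set.Ioc x0 x1)
    (α : ℝ → ℝ) (hα : IntegrableOn α (Set.Ioo x0 x1)) :
    ∀ ω : ℝ,
      (harmE x0 y α (ω : ℂ) * (starRingEnd ℂ) (harmE x0 y (fun s => -α s) (ω : ℂ))).re = 1 := by
  have hα' : IntervalIntegrable α volume x0 y :=
    (intervalIntegrable_iff_integrableOn_Ioo_of_le hy.1.le).2
      (hα.mono_set (Set.Ioo_subset_Ioo_right hy.2))
  exact fun ω => harmonic_exponential_energy_identity_general x0 y α hα' ω
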